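/- Let P and Q be Borel probability measures on ℝ^d with identical mixed moments of all orders, and suppose there exist linearly independent u_1,…,u_d such that each π_{u_j}(P) satisfies Carleman's condition. Then P = Q. -/

import Mathlib

open MeasureTheory Filter
open scoped InnerProductSpace ENNReal Topology BigOperators

/-- Weak convergence of a sequence of measures: convergence of integrals of all
bounded continuous functions. -/
def WeakTendsto {E : Type*} [MeasurableSpace E] [TopologicalSpace E]
    (μ : ℕ → Measure E) (ν : Measure E) : Prop :=
  ∀ f : BoundedContinuousFunction E ℝ,
    Tendsto (fun n => ∫ x, f x ∂(μ n)) atTop (𝓝 (∫ x, f x ∂ν))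

/-- Carleman's condition for a measure on ℝ: the series of reciprocal (2m)-th
roots of the even absolute moments diverges. -/
def Carleman (ν : Measure ℝ) : Prop :=
  ¬ Summable (fun m : ℕ =>
    (∫ t, |t| ^ (2 * (m + 1)) ∂ν) ^ (-(1 / (2 * (m + 1) : ℝ))))


lemma dc_carleman_ineq (a : ℕ → ℝ) (ha : ∀ k, 0 < a k) (hs : Summable a) :
    Summable (fun m : ℕ => (∏ k ∈ Finset.range (m+1), a k) ^ (1 / ((m:ℝ)+1))) := by
  set T : ℕ → ℝ := fun n => ∑ k ∈ Finset.range n, ((k:ℝ)+1) * a k with hT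
  have hT0 : ∀ n, 0 ≤ T n := fun n => Finset.sum_nonneg fun k _ => by
    have := ha k; positivity
  have key : ∀ K : ℕ, ∑ m ∈ Finset.range K, T (m+1) / (((m:ℝ)+1)*((m:ℝ)+2)) + T K / ((K:ℝ)+1)
      = ∑ k ∈ Finset.range K, a k := by
    intro K
    induction K with
    | zero => simp [hT]
    | succ K ih =>
      rw [Finset.sum_range_succ, Finset.sum_range_succ, ← ih]
      have : T (K+1) = T K + ((K:ℝ)+1) * a K := by simp [hT, Finset.sum_range_succ]
      rw [this]
      push_cast
      have h1 : (K:ℝ)+1 ≠ 0 := by positivity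
      have h2 : (K:ℝ)+2 ≠ 0 := by positivity
      have h3 : (K:ℝ)+1+1 ≠ 0 := by positivity
      field_simp
      ring
  have hS : Summable (fun m : ℕ => T (m+1) / (((m:ℝ)+1)*((m:ℝ)+2))) := by
    refine summable_of_sum_range_le (c := ∑' k, a k) (fun m => ?_) (fun K => ?_)
    · have := hT0 (m+1); positivity
    · have h1 := key K
      have h2 : 0 ≤ T K / ((K:ℝ)+1) := by have := hT0 K; positivity
      have h3 := hs.sum_le_tsum (Finset.range K) (fun i _ => (ha i).le)
      linarith
  refine Summable.of_nonneg_of_le (fun m => ?_) (fun m => ?_) (hS.mul_left (2 * Real.exp 1))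
  · exact Real.rpow_nonneg (Finset.prod_nonneg fun k _ => (ha k).le) _
  · have hm : (0:ℝ) < (m:ℝ)+1 := by positivity
    have am := Real.geom_mean_le_arith_mean (Finset.range (m+1)) (fun _ => (1:ℝ))
      (fun k => ((k:ℝ)+1) * a k) (fun _ _ => zero_le_one) (by simp; positivity)
      (fun k _ => by have := ha k; positivity)
    simp only [Real.rpow_one, Finset.sum_const, Finset.card_range, nsmul_eq_mul, mul_one, one_mul,
      Finset.prod_mul_distrib] at am
    have hfac : ∏ k ∈ Finset.range (m+1), ((k:ℝ)+1) = ((m+1).factorial : ℝ) := by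
      rw [← Finset.prod_range_add_one_eq_factorial]; push_cast; rfl
    have hP : 0 ≤ ∏ k ∈ Finset.range (m+1), a k := Finset.prod_nonneg fun k _ => (ha k).le
    rw [hfac, Real.mul_rpow (by positivity) hP] at am
    push_cast at am
    have hst : ((m:ℝ)+1) / Real.exp 1 ≤ ((m+1).factorial : ℝ) ^ (((m:ℝ)+1)⁻¹) := by
      have h1 := Real.pow_div_factorial_le_exp (x := (m:ℝ)+1) hm.le (m+1)
      have h2 : (((m:ℝ)+1) / Real.exp 1) ^ (m+1) ≤ ((m+1).factorial : ℝ) := by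
        rw [div_pow, ← Real.exp_nat_mul, div_le_iff₀ (Real.exp_pos _)]
        rw [div_le_iff₀ (by positivity)] at h1
        push_cast
        simp only [mul_one]
        linarith
      have h3 := Real.rpow_le_rpow (by positivity) h2 (inv_nonneg.2 hm.le)
      have h4 := Real.pow_rpow_inv_natCast (x := ((m:ℝ)+1) / Real.exp 1) (n := m+1)
        (by positivity) (by omega)
      push_cast at h4
      rwa [h4] at h3
    rw [one_div]
    set p := (∏ k ∈ Finset.range (m+1), a k) ^ (((m:ℝ)+1)⁻¹)
    have hp : 0 ≤ p := Real.rpow_nonneg hP _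
    have h5 : ((m:ℝ)+1) / Real.exp 1 * p ≤ T (m+1) / ((m:ℝ)+1) :=
      (mul_le_mul_of_nonneg_right hst hp).trans am
    have h6 : p ≤ Real.exp 1 * (T (m+1) / (((m:ℝ)+1) * ((m:ℝ)+1))) := by
      have he := Real.exp_pos 1
      have : p = (Real.exp 1 / ((m:ℝ)+1)) * (((m:ℝ)+1) / Real.exp 1 * p) := by field_simp
      rw [this]
      refine (mul_le_mul_of_nonneg_left h5 (by positivity)).trans (le_of_eq ?_)
      field_simp
    refine h6.trans ?_
    rw [mul_comm 2, mul_assoc]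
    refine mul_le_mul_of_nonneg_left ?_ (Real.exp_pos 1).le
    have := hT0 (m+1)
    rw [← mul_div_assoc, div_le_div_iff₀ (by positivity) (by positivity)]
    have : 0 ≤ T (m+1) * ((m:ℝ)+1) * m := by positivity
    nlinarith

/-- Bang's step. -/
lemma dc_bang_step (f : ℕ → ℝ → ℂ) (hf : ∀ n x, HasDerivAt (f n) (f (n+1) x) x)
    (M : ℕ → ℝ) (hM : ∀ n, 0 < M n) (C : ℝ) (hC : 0 ≤ C) (hb : ∀ n x, ‖f n x‖ ≤ C * M n)
    (N : ℕ) (μ : ℝ) (hμ : ∀ n < N, M (n+1) ≤ μ * M n) (hμ0 : 0 ≤ μ) (x : ℝ)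
    (hx : ∀ n, ‖f n x‖ ≤ C * Real.exp (-N) * Real.exp n * M n) (n : ℕ) (hn : n ≤ N) :
    ∀ y, x ≤ y → ‖f n y‖ ≤ C * Real.exp (-N) * Real.exp n * M n *
      Real.exp (Real.exp 1 * μ * (y - x)) := by
  induction hn using Nat.decreasingInduction with
  | self =>
    intro y hy
    refine (hb N y).trans ?_
    have : C * Real.exp (-N) * Real.exp N * M N = C * M N := by
      rw [mul_assoc C, ← Real.exp_add]; simp
    rw [this]
    refine le_mul_of_one_le_right (mul_nonneg hC (hM N).le) ?_
    refine Real.one_le_exp ?_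
    have : 0 ≤ y - x := by linarith
    positivity
  | of_succ n hn ih =>
    intro y hy
    have hB : ∀ z, HasDerivAt (fun y => C * Real.exp (-N) * Real.exp n * M n *
      Real.exp (Real.exp 1 * μ * (y - x))) (C * Real.exp (-N) * Real.exp n * M n *
      (Real.exp (Real.exp 1 * μ * (z - x)) * (Real.exp 1 * μ))) z := by
      intro z
      have := (((hasDerivAt_id z).sub_const x).const_mul (Real.exp 1 * μ)).exp.const_mul
        (C * Real.exp (-N) * Real.exp n * M n)
      simpa using this
    refine image_norm_le_of_norm_deriv_right_le_deriv_boundary (a := x) (b := y) (f' := f (n+1))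
      (fun z _ => (hf n z).continuousAt.continuousWithinAt)
      (fun z _ => (hf n z).hasDerivWithinAt) (by simpa using hx n) hB ?_ ⟨hy, le_rfl⟩
    intro z hz
    refine (ih z hz.1).trans ?_
    have h1 := hμ n hn
    have h2 : Real.exp ((n+1:ℕ):ℝ) = Real.exp n * Real.exp 1 := by
      rw [← Real.exp_add]; push_cast; rfl
    rw [h2]
    calc _ = (C * Real.exp (-N) * Real.exp n * Real.exp 1 *
            Real.exp (Real.exp 1 * μ * (z - x))) * M (n+1) := by ring
      _ ≤ (C * Real.exp (-N) * Real.exp n * Real.exp 1 *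
            Real.exp (Real.exp 1 * μ * (z - x))) * (μ * M n) :=
          mul_le_mul_of_nonneg_left h1 (by positivity)
      _ = _ := by ring

lemma dc_zero_right (f : ℕ → ℝ → ℂ) (hf : ∀ n x, HasDerivAt (f n) (f (n+1) x) x)
    (M : ℕ → ℝ) (hM : ∀ n, 0 < M n) (C : ℝ) (hC : 0 ≤ C) (hb : ∀ n x, ‖f n x‖ ≤ C * M n)
    (hlc : ∀ n, M (n+1) / M n ≤ M (n+2) / M (n+1))
    (hdiv : ¬ Summable (fun n => M n / M (n+1)))
    (h0 : ∀ n, f n 0 = 0) (x : ℝ) (hx : 0 ≤ x) : f 0 x = 0 := by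
  have hmono : Monotone (fun n => M (n+1) / M n) := monotone_nat_of_le_succ hlc
  have he := Real.exp_pos 1
  -- main claim, from level `N + j` down to level `N`
  have main : ∀ j N : ℕ, ∀ x, 0 ≤ x →
      x ≤ Real.exp (-1) * ∑ i ∈ Finset.range j, M (N+i) / M (N+i+1) →
      ∀ n, ‖f n x‖ ≤ C * Real.exp (-N) * Real.exp n * M n := by
    intro j
    induction j with
    | zero =>
      intro N x h1 h2 n
      have : x = 0 := le_antisymm (by simpa using h2) h1
      subst this
      rw [h0]
      have := hM n
      simp; positivity
    | succ j ih =>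
      intro N x h1 h2 n
      rw [Finset.sum_range_succ'] at h2
      have hM1 := hM N
      have hM2 := hM (N+1)
      have hMn := hM n
      -- level N+1 point
      set s := Real.exp (-1) * ∑ i ∈ Finset.range j, M (N+1+i) / M (N+1+i+1) with hs
      have hs0 : 0 ≤ s := mul_nonneg (Real.exp_pos _).le
        (Finset.sum_nonneg fun i _ => (div_pos (hM _) (hM _)).le)
      have hxs : x ≤ s + Real.exp (-1) * (M N / M (N+1)) := by
        refine h2.trans (le_of_eq ?_)
        rw [mul_add, hs]
        simp only [add_zero, add_comm, add_left_comm]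
      have hle : ∀ x0, 0 ≤ x0 → x0 ≤ s → ∀ n, ‖f n x0‖ ≤ C * Real.exp (-(N+1:ℕ)) *
          Real.exp n * M n := fun x0 a b => ih (N+1) x0 a b
      have hexp : Real.exp (-(N+1:ℕ)) * Real.exp 1 = Real.exp (-N) := by
        rw [← Real.exp_add]; push_cast; congr 1; ring
      by_cases hnN : N + 1 ≤ n
      · refine (hb n x).trans ?_
        have : 1 ≤ Real.exp (-N) * Real.exp n := by
          rw [← Real.exp_add]; apply Real.one_le_exp
          have : (N:ℝ)+1 ≤ n := by exact_mod_cast hnN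
          linarith
        calc C * M n ≤ C * M n * (Real.exp (-N) * Real.exp n) :=
              le_mul_of_one_le_right (by positivity) this
          _ = _ := by ring
      push Not at hnN
      obtain ⟨x0, hx00, hx0s, hx0x, hx0h⟩ : ∃ x0, 0 ≤ x0 ∧ x0 ≤ s ∧ x0 ≤ x ∧
          x - x0 ≤ Real.exp (-1) * (M N / M (N+1)) := by
        refine ⟨min x s, le_min h1 hs0, min_le_right _ _, min_le_left _ _, ?_⟩
        rcases le_total x s with h | h
        · rw [min_eq_left h]; simp; positivity
        · rw [min_eq_right h]; linarith
      have st := dc_bang_step f hf M hM C hC hb (N+1) (M (N+1) / M N) (fun k hk => by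
          have := hmono (Nat.lt_succ_iff.1 hk)
          simp only at this
          rwa [div_le_iff₀ (hM k)] at this) (by positivity) x0 (hle x0 hx00 hx0s) n hnN.le x hx0x
      refine st.trans ?_
      have : Real.exp (Real.exp 1 * (M (N+1) / M N) * (x - x0)) ≤ Real.exp 1 := by
        apply Real.exp_le_exp.2
        refine (mul_le_mul_of_nonneg_left hx0h (by positivity)).trans (le_of_eq ?_)
        rw [Real.exp_neg]; field_simp
      refine (mul_le_mul_of_nonneg_left this (by positivity)).trans (le_of_eq ?_)
      rw [← hexp]; ring
  -- conclude
  have all : ∀ N : ℕ, ‖f 0 x‖ ≤ C * Real.exp (-N) * M 0 := by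
    intro N
    have hd : ¬ Summable (fun i => M (N+i) / M (N+i+1)) := by
      intro h
      apply hdiv
      rw [← summable_nat_add_iff N]
      refine h.congr fun i => ?_
      rw [add_comm N i]
    have ht := (not_summable_iff_tendsto_nat_atTop_of_nonneg
      (fun i => (div_pos (hM _) (hM _)).le)).1 hd
    obtain ⟨j, hj⟩ := (ht.eventually_ge_atTop (x * Real.exp 1)).exists
    have := main j N x hx (by
      rw [Real.exp_neg, ← div_eq_inv_mul, le_div_iff₀ he]; exact hj) 0
    simpa using this
  have hlim : Tendsto (fun N : ℕ => C * Real.exp (-N) * M 0) atTop (𝓝 (C * 0 * M 0)) := by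
    refine (Tendsto.const_mul C ?_).mul_const _
    exact Real.tendsto_exp_neg_atTop_nhds_zero.comp tendsto_natCast_atTop_atTop
  have := ge_of_tendsto' hlim all
  simpa using this

lemma dc_zero (f : ℕ → ℝ → ℂ) (hf : ∀ n x, HasDerivAt (f n) (f (n+1) x) x)
    (M : ℕ → ℝ) (hM : ∀ n, 0 < M n) (C : ℝ) (hC : 0 ≤ C) (hb : ∀ n x, ‖f n x‖ ≤ C * M n)
    (hlc : ∀ n, M (n+1) / M n ≤ M (n+2) / M (n+1))
    (hdiv : ¬ Summable (fun n => M n / M (n+1)))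
    (h0 : ∀ n, f n 0 = 0) (x : ℝ) : f 0 x = 0 := by
  rcases le_total 0 x with hx | hx
  · exact dc_zero_right f hf M hM C hC hb hlc hdiv h0 x hx
  · have := dc_zero_right (fun n x => (-1)^n * f n (-x)) (fun n x => by
      have h := (HasDerivAt.scomp x (hf n (-x)) (hasDerivAt_neg x)).const_mul ((-1:ℂ)^n)
      refine (h.congr_deriv ?_ : HasDerivAt (fun x => (-1:ℂ)^n * f n (-x)) _ x)
      rw [pow_succ, neg_smul, one_smul]; ring) M hM C hC
      (fun n x => by simpa using hb n (-x)) hlc hdiv (fun n => by simp [h0]) (-x) (by linarith)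
    simpa using this

lemma dc_cs {E : Type*} [MeasurableSpace E] (P : Measure E) (f g : E → ℝ)
    (hff : Integrable (fun x => f x ^ 2) P) (hgg : Integrable (fun x => g x ^ 2) P)
    (hfg : Integrable (fun x => f x * g x) P) :
    (∫ x, f x * g x ∂P) ^ 2 ≤ (∫ x, f x ^ 2 ∂P) * ∫ x, g x ^ 2 ∂P := by
  have h : ∀ s : ℝ, 0 ≤ (∫ x, f x ^ 2 ∂P) * (s * s) + (2 * ∫ x, f x * g x ∂P) * s
      + ∫ x, g x ^ 2 ∂P := by
    intro s
    have h1 : 0 ≤ ∫ x, (s * f x + g x) ^ 2 ∂P := integral_nonneg fun x => sq_nonneg _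
    have h2 : (fun x => (s * f x + g x) ^ 2) =
        fun x => ((s*s) * f x ^ 2 + (2 * s) * (f x * g x)) + g x ^ 2 := by
      funext x; ring
    have h3 : Integrable (fun x => (s*s) * f x ^ 2 + (2 * s) * (f x * g x)) P :=
      (hff.const_mul _).add (hfg.const_mul _)
    rw [h2, integral_add h3 hgg,
      integral_add (hff.const_mul _) (hfg.const_mul _), integral_const_mul,
      integral_const_mul] at h1
    linarith
  have := discrim_le_zero h
  unfold discrim at this
  nlinarith

lemma dc_hasDeriv {E : Type*} [MeasurableSpace E] (P : Measure E) (y : E → ℝ) (hy : Measurable y)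
    (w : E → ℂ) (hi : ∀ n : ℕ, Integrable (fun x => (y x : ℂ) ^ n * w x) P) (n : ℕ) (t : ℝ) :
    HasDerivAt (fun t : ℝ => ∫ x, Complex.exp (t * y x * Complex.I) *
        (Complex.I ^ n * ((y x : ℂ) ^ n * w x)) ∂P)
      (∫ x, Complex.exp (t * y x * Complex.I) *
        (Complex.I ^ (n+1) * ((y x : ℂ) ^ (n+1) * w x)) ∂P) t := by
  have hnorm : ∀ (t : ℝ) x, ‖Complex.exp (t * y x * Complex.I)‖ = 1 := fun t x => by
    have := Complex.norm_exp_ofReal_mul_I (t * y x)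
    push_cast at this; exact this
  have hm : ∀ (n : ℕ) (t : ℝ), AEStronglyMeasurable (fun x => Complex.exp (t * y x * Complex.I) *
        (Complex.I ^ n * ((y x : ℂ) ^ n * w x))) P := by
    intro n t
    refine AEStronglyMeasurable.mul ?_ ((hi n).aestronglyMeasurable.const_mul _)
    exact Measurable.aestronglyMeasurable (by fun_prop)
  refine (hasDerivAt_integral_of_dominated_loc_of_deriv_le (s := Set.univ) (𝕜 := ℝ)
    (bound := fun x => ‖(y x : ℂ) ^ (n+1) * w x‖)
    (F := fun (t : ℝ) x => Complex.exp (t * y x * Complex.I) *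
        (Complex.I ^ n * ((y x : ℂ) ^ n * w x)))
    (F' := fun (t : ℝ) x => Complex.exp (t * y x * Complex.I) *
        (Complex.I ^ (n+1) * ((y x : ℂ) ^ (n+1) * w x)))
    Filter.univ_mem (Filter.Eventually.of_forall fun t => hm n t) ?_ (hm (n+1) t) ?_
    (hi (n+1)).norm ?_).2
  · refine ((hi n).norm).mono' (hm n t) (Filter.Eventually.of_forall fun x => ?_)
    rw [norm_mul, hnorm, norm_mul, norm_pow, Complex.norm_I]; simp
  · refine Filter.Eventually.of_forall fun x t _ => ?_
    rw [norm_mul, hnorm, norm_mul, norm_pow, Complex.norm_I]; simp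
  · refine Filter.Eventually.of_forall fun x t _ => ?_
    have h1 : HasDerivAt (fun t : ℝ => (t : ℂ) * y x * Complex.I) (1 * y x * Complex.I) t :=
      ((Complex.ofRealCLM.hasDerivAt (x := t)).mul_const _).mul_const _
    refine (h1.cexp.mul_const (Complex.I ^ n * ((y x : ℂ) ^ n * w x))).congr_deriv ?_
    ring

lemma dc_step {E : Type*} [MeasurableSpace E] (P Q : Measure E) (y : E → ℝ) (hy : Measurable y)
    (w : E → ℂ) (hP : ∀ n : ℕ, Integrable (fun x => (y x : ℂ) ^ n * w x) P)
    (hQ : ∀ n : ℕ, Integrable (fun x => (y x : ℂ) ^ n * w x) Q)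
    (heq : ∀ n : ℕ, ∫ x, (y x : ℂ) ^ n * w x ∂P = ∫ x, (y x : ℂ) ^ n * w x ∂Q)
    (M : ℕ → ℝ) (hM : ∀ n, 0 < M n) (C : ℝ) (hC : 0 ≤ C)
    (hbP : ∀ n, ∫ x, ‖(y x : ℂ) ^ n * w x‖ ∂P ≤ C * M n)
    (hbQ : ∀ n, ∫ x, ‖(y x : ℂ) ^ n * w x‖ ∂Q ≤ C * M n)
    (hlc : ∀ n, M (n+1) / M n ≤ M (n+2) / M (n+1))
    (hdiv : ¬ Summable (fun n => M n / M (n+1))) (t : ℝ) :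
    ∫ x, Complex.exp (t * y x * Complex.I) * w x ∂P
      = ∫ x, Complex.exp (t * y x * Complex.I) * w x ∂Q := by
  have hnorm : ∀ (t : ℝ) x, ‖Complex.exp (t * y x * Complex.I)‖ = 1 := fun t x => by
    have := Complex.norm_exp_ofReal_mul_I (t * y x)
    push_cast at this; exact this
  have hbound : ∀ (ρ : Measure E) (n : ℕ) (t : ℝ), ‖∫ x, Complex.exp (t * y x * Complex.I) *
        (Complex.I ^ n * ((y x : ℂ) ^ n * w x)) ∂ρ‖ ≤ ∫ x, ‖(y x : ℂ) ^ n * w x‖ ∂ρ := by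
    intro ρ n t
    refine (norm_integral_le_integral_norm _).trans (le_of_eq ?_)
    congr 1
    funext x
    rw [norm_mul, hnorm, norm_mul, norm_pow, Complex.norm_I]; simp
  have := dc_zero (fun n t => (∫ x, Complex.exp (t * y x * Complex.I) *
        (Complex.I ^ n * ((y x : ℂ) ^ n * w x)) ∂P) - ∫ x, Complex.exp (t * y x * Complex.I) *
        (Complex.I ^ n * ((y x : ℂ) ^ n * w x)) ∂Q)
    (fun n t => (dc_hasDeriv P y hy w hP n t).sub (dc_hasDeriv Q y hy w hQ n t))
    M hM (2 * C) (by positivity) (fun n t => by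
      refine (norm_sub_le _ _).trans ?_
      have h1 := (hbound P n t).trans (hbP n)
      have h2 := (hbound Q n t).trans (hbQ n)
      linarith) hlc hdiv (fun n => by
      simp only [Complex.ofReal_zero, zero_mul, Complex.exp_zero, one_mul, integral_const_mul]
      rw [heq n, sub_self]) t
  simpa [sub_eq_zero] using this

/-- The Carleman sequence of a moment sequence. -/
lemma dc_moments {E : Type*} [MeasurableSpace E] (P : Measure E) [IsProbabilityMeasure P]
    (y : E → ℝ) (hy : Measurable y) (hi : ∀ n : ℕ, Integrable (fun x => y x ^ n) P)
    (hcar : Carleman (P.map y)) :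
    (∀ n, 0 < √(∫ x, y x ^ (2*n) ∂P)) ∧
    (∀ n, √(∫ x, y x ^ (2*(n+1)) ∂P) / √(∫ x, y x ^ (2*n) ∂P) ≤
      √(∫ x, y x ^ (2*(n+2)) ∂P) / √(∫ x, y x ^ (2*(n+1)) ∂P)) ∧
    ¬ Summable (fun n => √(∫ x, y x ^ (2*n) ∂P) / √(∫ x, y x ^ (2*(n+1)) ∂P)) := by
  have hmap : ∀ m : ℕ, ∫ t, |t| ^ (2 * (m+1)) ∂(P.map y) = ∫ x, y x ^ (2*(m+1)) ∂P := by
    intro m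
    rw [integral_map hy.aemeasurable (Continuous.aestronglyMeasurable (by fun_prop))]
    congr 1; funext x
    rw [pow_mul, sq_abs, ← pow_mul]
  have hnn : ∀ n x, 0 ≤ y x ^ (2*n) := fun n x => by rw [pow_mul]; positivity
  have hpos0 : ∀ n, 0 < ∫ x, y x ^ (2*n) ∂P := by
    intro n
    refine lt_of_le_of_ne (integral_nonneg (hnn n)) fun h => hcar ?_
    have h2 := (integral_eq_zero_iff_of_nonneg (hnn n) (hi _)).1 h.symm
    have h3 : ∀ᵐ x ∂P, y x = 0 := by
      filter_upwards [h2] with x hx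
      simp only [Pi.zero_apply] at hx
      exact eq_zero_of_pow_eq_zero hx
    have h4 : ∀ m : ℕ, ∫ x, y x ^ (2*(m+1)) ∂P = 0 := fun m => by
      refine integral_eq_zero_of_ae ?_
      filter_upwards [h3] with x hx
      simp [hx]
    refine summable_zero.congr fun m => ?_
    rw [hmap, h4, Real.zero_rpow]
    have : (0:ℝ) < 2 * ((m:ℝ)+1) := by positivity
    simp
    positivity
  have hpos : ∀ n, 0 < √(∫ x, y x ^ (2*n) ∂P) := fun n => Real.sqrt_pos.2 (hpos0 n)
  refine ⟨hpos, fun n => ?_, fun hs => hcar ?_⟩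
  · rw [div_le_div_iff₀ (hpos _) (hpos _), ← Real.sqrt_mul (hpos0 _).le,
      ← Real.sqrt_mul (hpos0 _).le]
    apply Real.sqrt_le_sqrt
    have e1 : ∀ k x, (y x ^ k) ^ 2 = y x ^ (2 * k) := fun k x => by rw [← pow_mul, mul_comm]
    have e2 : ∀ x, y x ^ n * y x ^ (n+2) = y x ^ (2*(n+1)) := fun x => by ring
    have := dc_cs P (fun x => y x ^ n) (fun x => y x ^ (n+2)) (by simpa only [e1] using hi _)
      (by simpa only [e1] using hi _) (by simpa only [e2] using hi _)
    simp only [e1, e2] at this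
    nlinarith
  · refine (dc_carleman_ineq _ (fun k => div_pos (hpos _) (hpos _)) hs).congr fun m => ?_
    have hprod : ∀ m : ℕ, ∏ k ∈ Finset.range m,
        √(∫ x, y x ^ (2*k) ∂P) / √(∫ x, y x ^ (2*(k+1)) ∂P) =
        √(∫ x, y x ^ (2*0) ∂P) / √(∫ x, y x ^ (2*m) ∂P) := by
      intro m
      induction m with
      | zero => simp
      | succ m ih =>
        have h1 := (hpos m).ne'
        have h2 := (hpos (m+1)).ne'
        rw [Finset.prod_range_succ, ih]
        field_simp
    rw [hmap, hprod]
    have : √(∫ x, y x ^ (2*0) ∂P) = 1 := by simp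
    rw [this, Real.sqrt_eq_rpow, one_div, ← Real.rpow_neg (hpos0 _).le,
      ← Real.rpow_mul (hpos0 _).le]
    congr 1
    have : (m:ℝ)+1 ≠ 0 := by positivity
    field_simp

lemma dc_poly_int {d : ℕ} (P : Measure (EuclideanSpace ℝ (Fin d)))
    (hPint : ∀ α : Fin d → ℕ, Integrable (fun x => ∏ i, |x i| ^ α i) P)
    (α : Fin d → ℕ) : Integrable (fun x : EuclideanSpace ℝ (Fin d) => ∏ i, x i ^ α i) P := by
  refine (hPint α).mono' (Continuous.aestronglyMeasurable (by fun_prop))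
    (Filter.Eventually.of_forall fun x => ?_)
  simp

lemma dc_poly_int' {d : ℕ} (P : Measure (EuclideanSpace ℝ (Fin d)))
    (hPint : ∀ α : Fin d → ℕ, Integrable (fun x => ∏ i, |x i| ^ α i) P)
    (p : MvPolynomial (Fin d) ℝ) :
    Integrable (fun x : EuclideanSpace ℝ (Fin d) => MvPolynomial.eval (fun i => x i) p) P := by
  simp only [MvPolynomial.eval_eq']
  exact integrable_finsetSum _ fun α _ => (dc_poly_int P hPint α).const_mul _

lemma dc_poly_eq {d : ℕ} (P Q : Measure (EuclideanSpace ℝ (Fin d)))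
    (hPint : ∀ α : Fin d → ℕ, Integrable (fun x => ∏ i, |x i| ^ α i) P)
    (hQint : ∀ α : Fin d → ℕ, Integrable (fun x => ∏ i, |x i| ^ α i) Q)
    (hmom : ∀ α : Fin d → ℕ,
      (∫ x, ∏ i, x i ^ α i ∂P) = ∫ x, ∏ i, x i ^ α i ∂Q)
    (p : MvPolynomial (Fin d) ℝ) :
    ∫ x, MvPolynomial.eval (fun i => x i) p ∂P = ∫ x, MvPolynomial.eval (fun i => x i) p ∂Q := by
  simp only [MvPolynomial.eval_eq']
  rw [integral_finsetSum _ fun (α : Fin d →₀ ℕ) _ => (dc_poly_int P hPint α).const_mul (p.coeff α),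
    integral_finsetSum _ fun (α : Fin d →₀ ℕ) _ => (dc_poly_int Q hQint α).const_mul (p.coeff α)]
  simp only [integral_const_mul, hmom]

/-- The linear polynomial of a vector. -/
noncomputable def dcLin {d : ℕ} (v : EuclideanSpace ℝ (Fin d)) : MvPolynomial (Fin d) ℝ :=
  ∑ i, MvPolynomial.C (v i) * MvPolynomial.X i

lemma dcLin_eval {d : ℕ} (v x : EuclideanSpace ℝ (Fin d)) :
    MvPolynomial.eval (fun i => x i) (dcLin v) = ⟪v, x⟫_ℝ := by
  simp [dcLin, PiLp.inner_apply, mul_comm]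

theorem stmt19 (d : ℕ) (P Q : Measure (EuclideanSpace ℝ (Fin d)))
    [IsProbabilityMeasure P] [IsProbabilityMeasure Q]
    (hPint : ∀ α : Fin d → ℕ, Integrable (fun x => ∏ i, |x i| ^ α i) P)
    (hQint : ∀ α : Fin d → ℕ, Integrable (fun x => ∏ i, |x i| ^ α i) Q)
    (hmom : ∀ α : Fin d → ℕ,
      (∫ x, ∏ i, x i ^ α i ∂P) = ∫ x, ∏ i, x i ^ α i ∂Q)
    (u : Fin d → EuclideanSpace ℝ (Fin d)) (hu : LinearIndependent ℝ u)
    (hint : ∀ j, ∀ m : ℕ,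
      Integrable (fun t => |t| ^ m) (P.map (fun x => ⟪u j, x⟫_ℝ)))
    (hcar : ∀ j, Carleman (P.map (fun x => ⟪u j, x⟫_ℝ))) :
    P = Q := by
  have hpow : ∀ (v x : EuclideanSpace ℝ (Fin d)) (n : ℕ),
      ⟪v, x⟫_ℝ ^ n = MvPolynomial.eval (fun i => x i) (dcLin v ^ n) := fun v x n => by
    rw [map_pow, dcLin_eval]
  have hpolyc : ∀ p : MvPolynomial (Fin d) ℝ, Continuous
      (fun x : EuclideanSpace ℝ (Fin d) => MvPolynomial.eval (fun i => x i) p) := fun p => by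
    simp only [MvPolynomial.eval_eq']; fun_prop
  -- Cauchy-Schwarz bound for a measure with all moments
  have hbd : ∀ (ρ : Measure (EuclideanSpace ℝ (Fin d))),
      (∀ α : Fin d → ℕ, Integrable (fun x => ∏ i, |x i| ^ α i) ρ) →
      ∀ (v : EuclideanSpace ℝ (Fin d)) (p : MvPolynomial (Fin d) ℝ) (n : ℕ),
      ∫ x, |⟪v, x⟫_ℝ ^ n * MvPolynomial.eval (fun i => x i) p| ∂ρ ≤
        √(∫ x, MvPolynomial.eval (fun i => x i) (p ^ 2) ∂ρ) * √(∫ x, ⟪v, x⟫_ℝ ^ (2*n) ∂ρ) := by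
    intro ρ hρ v p n
    have e1 : ∀ x, |⟪v, x⟫_ℝ ^ n| ^ 2 = MvPolynomial.eval (fun i => x i) (dcLin v ^ (2*n)) :=
      fun x => by rw [sq_abs, ← pow_mul, mul_comm, hpow]
    have e2 : ∀ x : EuclideanSpace ℝ (Fin d), |MvPolynomial.eval (fun i => x i) p| ^ 2 =
        MvPolynomial.eval (fun i => x i) (p ^ 2) := fun x => by rw [sq_abs, map_pow]
    have e3 : ∀ x : EuclideanSpace ℝ (Fin d),
        |⟪v, x⟫_ℝ ^ n| * |MvPolynomial.eval (fun i => x i) p| =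
        |MvPolynomial.eval (fun i => x i) (dcLin v ^ n * p)| := fun x => by
      rw [map_mul, abs_mul, hpow]
    have := dc_cs ρ (fun x => |⟪v, x⟫_ℝ ^ n|) (fun x => |MvPolynomial.eval (fun i => x i) p|)
      (by simp only [e1]; exact dc_poly_int' ρ hρ _) (by simp only [e2]; exact dc_poly_int' ρ hρ _)
      (by simp only [e3]; exact (dc_poly_int' ρ hρ _).abs)
    have hn : 0 ≤ ∫ x, MvPolynomial.eval (fun i => x i) (p ^ 2) ∂ρ :=
      integral_nonneg fun x => by simp only [← e2]; positivity
    simp only [abs_mul]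
    rw [← Real.sqrt_mul hn]
    apply Real.le_sqrt_of_sq_le
    rw [mul_comm (∫ x, MvPolynomial.eval (fun i => x i) (p ^ 2) ∂ρ)]
    simp only [e1, e2] at this
    simpa only [hpow] using this
  have main : ∀ (S : Finset (Fin d)) (t : Fin d → ℝ) (p : MvPolynomial (Fin d) ℝ),
      ∫ x, Complex.exp ((∑ j ∈ S, t j * ⟪u j, x⟫_ℝ : ℝ) * Complex.I) *
          (MvPolynomial.eval (fun i => x i) p : ℝ) ∂P
      = ∫ x, Complex.exp ((∑ j ∈ S, t j * ⟪u j, x⟫_ℝ : ℝ) * Complex.I) *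
          (MvPolynomial.eval (fun i => x i) p : ℝ) ∂Q := by
    intro S
    induction S using Finset.induction_on with
    | empty =>
      intro t p
      simp only [Finset.sum_empty, Complex.ofReal_zero, zero_mul, Complex.exp_zero, one_mul]
      rw [integral_complex_ofReal, integral_complex_ofReal, dc_poly_eq P Q hPint hQint hmom]
    | insert k S hk ih =>
      intro t p
      obtain ⟨hM, hlc, hdiv⟩ := dc_moments P (fun x => ⟪u k, x⟫_ℝ) (by fun_prop)
        (fun n => by simp only [hpow]; exact dc_poly_int' P hPint _) (hcar k)
      set w : EuclideanSpace ℝ (Fin d) → ℂ := fun x =>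
        Complex.exp ((∑ j ∈ S, t j * ⟪u j, x⟫_ℝ : ℝ) * Complex.I) *
          (MvPolynomial.eval (fun i => x i) p : ℝ) with hw
      have hyw : ∀ n x, (⟪u k, x⟫_ℝ : ℂ) ^ n * w x =
          Complex.exp ((∑ j ∈ S, t j * ⟪u j, x⟫_ℝ : ℝ) * Complex.I) *
          (MvPolynomial.eval (fun i => x i) (dcLin (u k) ^ n * p) : ℝ) := by
        intro n x
        rw [map_mul, ← hpow, hw]
        push_cast; ring
      have hn : ∀ n x, ‖(⟪u k, x⟫_ℝ : ℂ) ^ n * w x‖ =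
          |⟪u k, x⟫_ℝ ^ n * MvPolynomial.eval (fun i => x i) p| := by
        intro n x
        rw [hyw, norm_mul, Complex.norm_exp_ofReal_mul_I, one_mul, Complex.norm_real, map_mul,
          hpow, Real.norm_eq_abs]
      have hwc : Continuous w := by
        have := hpolyc p
        rw [hw]; fun_prop
      have hI : ∀ (ρ : Measure (EuclideanSpace ℝ (Fin d))),
          (∀ α : Fin d → ℕ, Integrable (fun x => ∏ i, |x i| ^ α i) ρ) → ∀ n : ℕ,
          Integrable (fun x => (⟪u k, x⟫_ℝ : ℂ) ^ n * w x) ρ := by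
        intro ρ hρ n
        refine (dc_poly_int' ρ hρ (dcLin (u k) ^ n * p)).abs.mono'
          (Continuous.aestronglyMeasurable (by fun_prop)) (Filter.Eventually.of_forall fun x => ?_)
        rw [hn, map_mul, hpow]
      have st := dc_step P Q (fun x => ⟪u k, x⟫_ℝ) (by fun_prop) w (hI P hPint) (hI Q hQint)
        (fun n => by simp only [hyw]; exact ih t _)
        (fun n => √(∫ x, ⟪u k, x⟫_ℝ ^ (2*n) ∂P)) hM
        (√(∫ x, MvPolynomial.eval (fun i => x i) (p ^ 2) ∂P)) (Real.sqrt_nonneg _)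
        (fun n => by simp only [hn]; exact hbd P hPint (u k) p n)
        (fun n => by
          have h1 := hbd Q hQint (u k) p n
          simp only [hn]
          simp only [hpow] at h1 ⊢
          rwa [← dc_poly_eq P Q hPint hQint hmom, ← dc_poly_eq P Q hPint hQint hmom] at h1)
        hlc hdiv (t k)
      have hfin : ∀ x, Complex.exp ((∑ j ∈ insert k S, t j * ⟪u j, x⟫_ℝ : ℝ) * Complex.I) *
          (MvPolynomial.eval (fun i => x i) p : ℝ) =
          Complex.exp ((t k : ℂ) * (⟪u k, x⟫_ℝ : ℂ) * Complex.I) * w x := by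
        intro x
        rw [Finset.sum_insert hk, hw]
        simp only
        rw [← mul_assoc, ← Complex.exp_add]
        congr 2
        push_cast; ring
      simp only [hfin]
      exact st
  apply Measure.ext_of_charFun
  funext v
  have hspan : v ∈ Submodule.span ℝ (Set.range u) := by
    rw [hu.span_eq_top_of_card_eq_finrank' (by simp)]; trivial
  obtain ⟨c, hc⟩ := (Submodule.mem_span_range_iff_exists_fun ℝ).1 hspan
  have := main Finset.univ c 1
  have hin : ∀ x, ∑ j, c j * ⟪u j, x⟫_ℝ = ⟪x, v⟫_ℝ := fun x => by
    rw [← hc, inner_sum]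
    refine Finset.sum_congr rfl fun j _ => ?_
    rw [inner_smul_right, real_inner_comm]
  simp only [hin, map_one, Complex.ofReal_one, mul_one] at this
  exact this
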